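/- Let H be a separable complex Hilbert space and let A be a commutative C*-subalgebra of B(H), i.e. a commutative, norm-closed, star-closed subalgebra of the algebra of bounded linear operators on H. Then the following conditions are equivalent: (a) the spectrum of A is paracompact; (b) the spectrum of A is σ-compact; (c) the spectrum of A is a Lindelöf space (every open cover has a countable subcover); (d) A has a sequential approximate identity bounded by one, i.e. a sequence (e_n) in A with ‖e_n‖ ≤ 1 for all n and ‖a·e_n − a‖ → 0 for every a ∈ A. -/

import Mathlib

open Filter

/-!
By Gelfand duality `A ≃⋆ₐ[ℂ] C₀(X, ℂ)`, where `X` is the spectrum of `A`, a locally compact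
Hausdorff space; adding the point at infinity to `X` amounts to adjoining a unit to `A`. For such
`X`, being Lindelöf, being σ-compact and the existence of a sequential approximate identity in
`C₀(X, ℂ)` are always equivalent and imply paracompactness. Conversely, disjoint nonempty open
subsets of `X` carry nonzero functions with zero product, that is, operators with mutually
orthogonal ranges, and a separable Hilbert space has room for only countably many of those. So `X`
satisfies the countable chain condition; then locally finite open covers of `X` are countable, and
paracompactness implies Lindelöf.
-/

open OnePoint Set Topology TopologicalSpace WeakDual ZeroAtInfty

section CountableChainCondition

/-- The countable chain condition: every family of pairwise disjoint nonempty open sets is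
countable. -/
class CCCSpace (X : Type*) [TopologicalSpace X] : Prop where
  countable_of_pairwiseDisjoint_id : ∀ C : Set (Set X), (∀ U ∈ C, IsOpen U) →
    (∀ U ∈ C, U.Nonempty) → C.PairwiseDisjoint id → C.Countable

namespace CCCSpace

variable {X ι : Type*} [TopologicalSpace X] [CCCSpace X]

lemma countable_of_pairwiseDisjoint {s : Set ι} {U : ι → Set X} (hUo : ∀ i ∈ s, IsOpen (U i))
    (hUne : ∀ i ∈ s, (U i).Nonempty) (hUd : s.PairwiseDisjoint U) : s.Countable := by
  have hinj : InjOn U s := by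
    intro i hi j hj hij
    by_contra hne
    have hdisj : Disjoint (U i) (U j) := hUd hi hj hne
    rw [← hij, disjoint_self] at hdisj
    exact (hUne i hi).ne_empty hdisj
  refine countable_of_injective_of_countable_image hinj <|
    countable_of_pairwiseDisjoint_id (U '' s) (forall_mem_image.2 hUo) (forall_mem_image.2 hUne) ?_
  rintro _ ⟨i, hi, rfl⟩ _ ⟨j, hj, rfl⟩ hne
  exact hUd hi hj (ne_of_apply_ne U hne)

lemma countable_of_locallyFinite {V : ι → Set X} (hVo : ∀ i, IsOpen (V i))
    (hV : LocallyFinite V) : {i | (V i).Nonempty}.Countable := by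
  have hW : ∀ i ∈ {i | (V i).Nonempty}, ∃ W ⊆ V i, IsOpen W ∧ W.Nonempty ∧
      {j | (V j ∩ W).Nonempty}.Finite := by
    rintro i ⟨x, hx⟩
    obtain ⟨t, ht, htfin⟩ := hV x
    refine ⟨V i ∩ interior t, inter_subset_left, (hVo i).inter isOpen_interior,
      ⟨x, hx, mem_interior_iff_mem_nhds.2 ht⟩, htfin.subset fun j hj => hj.mono ?_⟩
    exact inter_subset_inter_right _ (inter_subset_right.trans interior_subset)
  choose! W hWV hWo hWne hWfin using hW
  -- With all sizes equal to `0`, the Vitali covering lemma yields a maximal disjoint subfamily.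
  obtain ⟨u, hus, hud, hu⟩ := Vitali.exists_disjoint_subfamily_covering_enlargement W
    {i | (V i).Nonempty} 0 2 one_lt_two (fun _ _ => le_rfl) 0 (fun _ _ => le_rfl) hWne
  have huc : u.Countable := countable_of_pairwiseDisjoint
    (fun i hi => hWo i (hus hi)) (fun i hi => hWne i (hus hi)) hud
  refine (huc.biUnion fun j hj => (hWfin j (hus hj)).countable).mono fun i hi => ?_
  obtain ⟨j, hj, hij, -⟩ := hu i hi
  exact mem_biUnion hj (hij.mono (inter_subset_inter_left _ (hWV i hi)))

lemma lindelofSpace_of_paracompactSpace [ParacompactSpace X] : LindelofSpace X := by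
  refine ⟨isLindelof_of_countable_subcover fun U hUo hU => ?_⟩
  obtain ⟨V, hVo, hVc, hVf, hVU⟩ := precise_refinement U hUo (univ_subset_iff.1 hU)
  refine ⟨_, countable_of_locallyFinite hVo hVf, fun x _ => ?_⟩
  obtain ⟨i, hi⟩ := mem_iUnion.1 (hVc.ge (mem_univ x))
  exact mem_biUnion (show i ∈ {i | (V i).Nonempty} from ⟨x, hi⟩) (hVU i hi)

end CCCSpace

lemma sigmaCompactSpace_of_lindelofSpace {X : Type*} [TopologicalSpace X]
    [WeaklyLocallyCompactSpace X] [LindelofSpace X] : SigmaCompactSpace X := by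
  choose K hK hKx using fun x : X => exists_compact_mem_nhds x
  obtain ⟨t, ht, htK⟩ := LindelofSpace.elim_nhds_subcover K hKx
  exact .of_countable (K '' t) (ht.image K) (forall_mem_image.2 fun x _ => hK x)
    (by rw [sUnion_image, htK])

theorem CCCSpace.tfae_paracompact_sigmaCompact_lindelof (X : Type*) [TopologicalSpace X]
    [CCCSpace X] [WeaklyLocallyCompactSpace X] [T2Space X] :
    List.TFAE [ParacompactSpace X, SigmaCompactSpace X, LindelofSpace X] := by
  tfae_have 1 → 3 := fun _ => CCCSpace.lindelofSpace_of_paracompactSpace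
  tfae_have 3 → 2 := fun _ => sigmaCompactSpace_of_lindelofSpace
  tfae_have 2 → 1 := fun _ => inferInstance
  tfae_finish

end CountableChainCondition

section CountablyDecomposable

/-- Every set of nonzero, pairwise orthogonal elements of `A` is countable. This adapts the notion
of a countably decomposable von Neumann algebra to C⋆-algebras, which may lack projections. -/
def CountablyDecomposable (A : Type*) [Mul A] [Zero A] [Star A] : Prop :=
  ∀ s : Set A, 0 ∉ s → s.Pairwise (fun a b => star a * b = 0) → s.Countable

lemma CountablyDecomposable.of_injective {F A B : Type*} [NonUnitalNonAssocSemiring A] [Star A]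
    [NonUnitalNonAssocSemiring B] [Star B] [FunLike F A B] [NonUnitalRingHomClass F A B]
    [StarHomClass F A B] (hB : CountablyDecomposable B) (f : F) (hf : Function.Injective f) :
    CountablyDecomposable A := by
  intro s hs0 hs
  refine countable_of_injective_of_countable_image hf.injOn (hB (f '' s) ?_ ?_)
  · rintro ⟨a, ha, hfa⟩
    exact hs0 ((map_eq_zero_iff f hf).1 hfa ▸ ha)
  · rintro _ ⟨a, ha, rfl⟩ _ ⟨b, hb, rfl⟩ hab
    rw [← map_star, ← map_mul, hs ha hb (ne_of_apply_ne f hab), map_zero]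

variable {𝕜 E : Type*} [RCLike 𝕜] [NormedAddCommGroup E] [InnerProductSpace 𝕜 E] [SeparableSpace E]

lemma countable_of_pairwise_inner_eq_zero {ι : Type*} {v : ι → E} (hv0 : ∀ i, v i ≠ 0)
    (hv : Pairwise fun i j => inner 𝕜 (v i) (v j) = 0) : Countable ι := by
  refine Pairwise.countable_of_isOpen_disjoint (s := fun i => Metric.ball (v i) (‖v i‖ / 2))
    (fun i j hij => Metric.ball_disjoint_ball ?_) (fun i => Metric.isOpen_ball)
    (fun i => ⟨v i, Metric.mem_ball_self (half_pos (norm_pos_iff.2 (hv0 i)))⟩)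
  have hpythagoras : ‖v i - v j‖ ^ 2 = ‖v i‖ ^ 2 + ‖v j‖ ^ 2 := by
    rw [norm_sub_sq (𝕜 := 𝕜), hv hij, map_zero, mul_zero, sub_zero]
  rw [dist_eq_norm]
  refine le_of_sq_le_sq ?_ (norm_nonneg _)
  nlinarith [sq_nonneg (‖v i‖ - ‖v j‖)]

variable (𝕜 E) in
theorem countablyDecomposable_continuousLinearMap [CompleteSpace E] :
    CountablyDecomposable (E →L[𝕜] E) := by
  intro s hs0 hs
  have hx : ∀ T : s, ∃ x, T.1 x ≠ 0 := by
    rintro ⟨T, hT⟩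
    by_contra! h
    exact hs0 ((ContinuousLinearMap.ext h : T = 0) ▸ hT)
  choose x hx using hx
  refine countable_of_pairwise_inner_eq_zero (𝕜 := 𝕜) hx fun T R hTR => ?_
  have hmul : ContinuousLinearMap.adjoint T.1 (R.1 (x R)) = 0 :=
    DFunLike.congr_fun (hs T.2 R.2 (Subtype.coe_ne_coe.2 hTR)) (x R)
  change inner 𝕜 (T.1 (x T)) (R.1 (x R)) = 0
  rw [← ContinuousLinearMap.adjoint_inner_right, hmul, inner_zero_right]

end CountablyDecomposable

section ZeroAtInfty

section OnePoint

variable {X β : Type*} [TopologicalSpace X] [R1Space X] [TopologicalSpace β] [Zero β]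

/-- The extension of a function vanishing at infinity to the one-point compactification, with value
`0` at `∞`. -/
def onePointExtend (f : C₀(X, β)) : C(OnePoint X, β) :=
  OnePoint.continuousMapMk f.toContinuousMap 0 <| by
    rw [coclosedCompact_eq_cocompact]
    exact zero_at_infty f

lemma onePointExtend_infty (f : C₀(X, β)) : onePointExtend f ∞ = 0 := rfl

lemma onePointExtend_coe (f : C₀(X, β)) (x : X) : onePointExtend f x = f x := rfl

end OnePoint

lemma zeroAtInfty_norm_le {X E : Type*} [TopologicalSpace X] [SeminormedAddCommGroup E]
    {f : C₀(X, E)} {r : ℝ} (hr : 0 ≤ r) : ‖f‖ ≤ r ↔ ∀ x, ‖f x‖ ≤ r := by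
  rw [← ZeroAtInftyContinuousMap.norm_toBCF_eq_norm, BoundedContinuousFunction.norm_le hr]
  rfl

lemma isCompact_setOf_le_norm_zeroAtInfty {X E : Type*} [TopologicalSpace X]
    [SeminormedAddCommGroup E] (f : C₀(X, E)) {r : ℝ} (hr : 0 < r) :
    IsCompact {x | r ≤ ‖f x‖} := by
  obtain ⟨K, hK, hKf⟩ := mem_cocompact.1 <|
    (zero_at_infty f).norm.eventually_lt_const (by rwa [norm_zero])
  refine hK.of_isClosed_subset (isClosed_le continuous_const (map_continuous f).norm)
    fun x (hx : r ≤ ‖f x‖) => ?_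
  by_contra hxK
  exact hx.not_gt (hKf hxK)

variable {X : Type*} (𝕜 : Type*) [TopologicalSpace X] [RegularSpace X] [LocallyCompactSpace X]
  [RCLike 𝕜]

lemma exists_zeroAtInfty_one_zero_of_isCompact {K U : Set X} (hK : IsCompact K) (hU : IsOpen U)
    (hKU : K ⊆ U) : ∃ f : C₀(X, 𝕜), ‖f‖ ≤ 1 ∧ EqOn f 1 K ∧ EqOn f 0 Uᶜ := by
  obtain ⟨f, hfK, hfU, hfc, hf⟩ := exists_continuous_one_zero_of_isCompact hK hU.isClosed_compl
    (disjoint_compl_right_iff_subset.2 hKU)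
  have hlim : Tendsto (fun x => (f x : 𝕜)) (cocompact X) (𝓝 0) := by
    simpa only [RCLike.ofReal_zero] using!
      (RCLike.continuous_ofReal.tendsto (0 : ℝ)).comp hfc.is_zero_at_infty
  refine ⟨⟨⟨fun x => (f x : 𝕜), by fun_prop⟩, hlim⟩,
    (zeroAtInfty_norm_le zero_le_one).2 fun x => ?_, fun x hx => ?_, fun x hx => ?_⟩
  · simpa [abs_of_nonneg (hf x).1] using! (hf x).2
  · simp [hfK hx]
  · simp [hfU hx]

theorem exists_seq_approximateUnit_zeroAtInfty [SigmaCompactSpace X] :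
    ∃ e : ℕ → C₀(X, 𝕜), (∀ n, ‖e n‖ ≤ 1) ∧
      ∀ f, Tendsto (fun n => ‖f * e n - f‖) atTop (𝓝 0) := by
  let K : CompactExhaustion X := default
  choose e he heK _ using fun n =>
    exists_zeroAtInfty_one_zero_of_isCompact 𝕜 (K.isCompact n) isOpen_univ (subset_univ _)
  refine ⟨e, he, fun f => Metric.tendsto_atTop.2 fun ε hε => ?_⟩
  obtain ⟨N, hN⟩ := K.exists_superset_of_isCompact
    (isCompact_setOf_le_norm_zeroAtInfty f (r := ε / 4) (by positivity))
  refine ⟨N, fun n hn => ?_⟩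
  have hbound : ‖f * e n - f‖ ≤ ε / 2 := by
    refine (zeroAtInfty_norm_le (by positivity)).2 fun x => ?_
    rw [ZeroAtInftyContinuousMap.sub_apply, ZeroAtInftyContinuousMap.mul_apply]
    by_cases hx : ε / 4 ≤ ‖f x‖
    · have hex : e n x = 1 := heK n (K.subset hn (hN hx))
      rw [hex, mul_one, sub_self, norm_zero]
      positivity
    · have hex : ‖e n x‖ ≤ 1 := (zeroAtInfty_norm_le zero_le_one).1 (he n) x
      calc ‖f x * e n x - f x‖ ≤ ‖f x‖ * ‖e n x‖ + ‖f x‖ := by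
            simpa only [norm_mul] using norm_sub_le (f x * e n x) (f x)
        _ ≤ ‖f x‖ * 1 + ‖f x‖ := by gcongr
        _ ≤ ε / 2 := by linarith
  rw [dist_zero_right, norm_norm]
  exact hbound.trans_lt (half_lt_self hε)

variable {𝕜}

theorem sigmaCompactSpace_of_seq_approximateUnit {e : ℕ → C₀(X, 𝕜)}
    (he : ∀ f, Tendsto (fun n => ‖f * e n - f‖) atTop (𝓝 0)) : SigmaCompactSpace X := by
  refine ⟨⟨fun n => {x | 1 / 2 ≤ ‖e n x‖},
    fun n => isCompact_setOf_le_norm_zeroAtInfty _ one_half_pos, ?_⟩⟩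
  refine iUnion_eq_univ_iff.2 fun x => ?_
  obtain ⟨f, -, hf, -⟩ := exists_zeroAtInfty_one_zero_of_isCompact 𝕜 (isCompact_singleton (x := x))
    isOpen_univ (subset_univ _)
  have hfx : f x = 1 := hf rfl
  obtain ⟨n, hn⟩ := ((he f).eventually_lt_const one_half_pos).exists
  have hdist : ‖1 - e n x‖ ≤ ‖f * e n - f‖ := by
    simpa [hfx, norm_sub_rev] using
      (zeroAtInfty_norm_le (norm_nonneg _)).1 (le_refl ‖f * e n - f‖) x
  have hone : 1 - ‖e n x‖ ≤ ‖1 - e n x‖ := by simpa using norm_sub_norm_le 1 (e n x)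
  exact ⟨n, show 1 / 2 ≤ ‖e n x‖ by linarith⟩

theorem CountablyDecomposable.cccSpace (h : CountablyDecomposable C₀(X, 𝕜)) : CCCSpace X where
  countable_of_pairwiseDisjoint_id C hCo hCne hCd := by
    have hf : ∀ U ∈ C, ∃ f : C₀(X, 𝕜), f ≠ 0 ∧ EqOn f 0 Uᶜ := by
      intro U hU
      obtain ⟨x, hx⟩ := hCne U hU
      obtain ⟨f, -, hfx, hfU⟩ := exists_zeroAtInfty_one_zero_of_isCompact 𝕜 isCompact_singleton
        (hCo U hU) (singleton_subset_iff.2 hx)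
      refine ⟨f, ?_, hfU⟩
      rintro rfl
      exact zero_ne_one (hfx rfl)
    choose! f hf0 hfU using hf
    have horth : ∀ U ∈ C, ∀ V ∈ C, U ≠ V → star (f U) * f V = 0 := by
      intro U hU V hV hUV
      ext x
      by_cases hx : x ∈ U
      · simp [hfU V hV (disjoint_left.1 (hCd hU hV hUV) hx)]
      · simp [hfU U hU hx]
    have hinj : InjOn f C := by
      intro U hU V hV hfUV
      by_contra hUV
      have hself : star (f U) * f U = 0 := by simpa only [← hfUV] using horth U hU V hV hUV
      exact hf0 U hU ((CStarRing.star_mul_self_eq_zero_iff _).1 hself)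
    refine countable_of_injective_of_countable_image hinj (h (f '' C) ?_ ?_)
    · rintro ⟨U, hU, h0⟩
      exact hf0 U hU h0
    · rintro _ ⟨U, hU, rfl⟩ _ ⟨V, hV, rfl⟩ hUV
      exact horth U hU V hV (ne_of_apply_ne f hUV)

end ZeroAtInfty

section Character

variable {𝕜 A : Type*} [NontriviallyNormedField 𝕜] [NonUnitalNormedRing A] [NormedSpace 𝕜 A]

lemma continuous_character_apply (a : A) : Continuous fun φ : characterSpace 𝕜 A => φ a :=
  (WeakDual.eval_continuous a).comp continuous_subtype_val

lemma exists_character_apply_ne_zero (φ : characterSpace 𝕜 A) : ∃ a, φ a ≠ 0 := by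
  by_contra! h
  exact φ.2.1 (ContinuousLinearMap.ext h)

lemma norm_character_le_one (φ : characterSpace 𝕜 A) : ‖CharacterSpace.toCLM φ‖ ≤ 1 := by
  set f := CharacterSpace.toCLM φ
  have hsqrt : ‖f‖ ≤ √‖f‖ := by
    refine f.opNorm_le_bound (Real.sqrt_nonneg _) fun a => le_of_sq_le_sq ?_ (by positivity)
    have hmul : f (a * a) = f a * f a := map_mul φ a a
    calc ‖f a‖ ^ 2 = ‖f (a * a)‖ := by rw [hmul, norm_mul, sq]
      _ ≤ ‖f‖ * (‖a‖ * ‖a‖) := f.le_opNorm_of_le (norm_mul_le a a)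
      _ = (√‖f‖ * ‖a‖) ^ 2 := by rw [mul_pow, Real.sq_sqrt (norm_nonneg f), sq ‖a‖]
  have hsq : ‖f‖ ^ 2 ≤ ‖f‖ := (Real.le_sqrt (norm_nonneg f) (norm_nonneg f)).1 hsqrt
  nlinarith

variable [ProperSpace 𝕜]

lemma isCompact_setOf_le_norm_character_apply (a : A) {r : ℝ} (hr : 0 < r) :
    IsCompact {φ : characterSpace 𝕜 A | r ≤ ‖φ a‖} := by
  have himage : Subtype.val '' {φ : characterSpace 𝕜 A | r ≤ ‖φ a‖} =
      (characterSpace 𝕜 A ∪ {0}) ∩ {φ : WeakDual 𝕜 A | r ≤ ‖φ a‖} := by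
    ext φ
    constructor
    · rintro ⟨ψ, hψ, rfl⟩
      exact ⟨.inl ψ.2, hψ⟩
    · rintro ⟨hφ | rfl, hφa⟩
      · exact ⟨⟨φ, hφ⟩, hφa, rfl⟩
      · exact absurd (hφa.trans_eq norm_zero) hr.not_ge
  rw [IsEmbedding.subtypeVal.isCompact_iff]
  refine (WeakDual.isCompact_closedBall (0 : StrongDual 𝕜 A) 1).of_isClosed_subset ?_ ?_
  · rw [himage]
    exact (CharacterSpace.union_zero_isClosed 𝕜 A).inter
      (isClosed_le continuous_const (WeakDual.eval_continuous a).norm)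
  · rintro _ ⟨φ, -, rfl⟩
    exact mem_closedBall_zero_iff.2 (norm_character_le_one φ)

/-- The Gelfand transform of an element of a possibly non-unital algebra. -/
noncomputable def gelfandEval (𝕜 : Type*) [NontriviallyNormedField 𝕜] [NormedSpace 𝕜 A]
    [ProperSpace 𝕜] (a : A) : C₀(characterSpace 𝕜 A, 𝕜) where
  toFun φ := φ a
  continuous_toFun := continuous_character_apply a
  zero_at_infty' := by
    refine Metric.tendsto_nhds.2 fun ε hε => ?_
    filter_upwards [(isCompact_setOf_le_norm_character_apply a hε).compl_mem_cocompact] with φ hφ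
    rw [dist_zero_right]
    exact not_le.1 hφ

lemma gelfandEval_apply (a : A) (φ : characterSpace 𝕜 A) : gelfandEval 𝕜 a φ = φ a := rfl

instance weaklyLocallyCompactSpace_characterSpace :
    WeaklyLocallyCompactSpace (characterSpace 𝕜 A) where
  exists_compact_mem_nhds φ := by
    obtain ⟨a, ha⟩ := exists_character_apply_ne_zero φ
    have hpos := norm_pos_iff.2 ha
    refine ⟨_, isCompact_setOf_le_norm_character_apply a (half_pos hpos), ?_⟩
    filter_upwards [(continuous_character_apply a).norm.continuousAt.eventually
      (lt_mem_nhds (half_lt_self hpos))] with ψ hψ using hψ.le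

end Character

section Unitization

variable {𝕜 A : Type*} [NontriviallyNormedField 𝕜] [CompleteSpace 𝕜] [NonUnitalNormedRing A]
  [NormedSpace 𝕜 A] [CompleteSpace A] [IsScalarTower 𝕜 A A] [SMulCommClass 𝕜 A A]
  [RegularNormedAlgebra 𝕜 A]

/-- The character of the unitization determined by a point of the one-point compactification of the
spectrum: a character of `A` extends uniquely, and `∞` corresponds to the projection to the
scalars. -/
noncomputable def onePointCharacter (y : OnePoint (characterSpace 𝕜 A)) :
    characterSpace 𝕜 (Unitization 𝕜 A) :=
  CharacterSpace.equivAlgHom.symm <| Unitization.lift <| y.elim 0 CharacterSpace.toNonUnitalAlgHom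

lemma onePointCharacter_infty_apply (x : Unitization 𝕜 A) :
    onePointCharacter (∞ : OnePoint (characterSpace 𝕜 A)) x = x.fst := by
  simp [onePointCharacter]

lemma onePointCharacter_coe_apply (φ : characterSpace 𝕜 A) (x : Unitization 𝕜 A) :
    onePointCharacter (φ : OnePoint (characterSpace 𝕜 A)) x = x.fst + φ x.snd := by
  simp [onePointCharacter]

lemma onePointCharacter_apply [ProperSpace 𝕜] (y : OnePoint (characterSpace 𝕜 A))
    (x : Unitization 𝕜 A) :
    onePointCharacter y x = x.fst + onePointExtend (gelfandEval 𝕜 x.snd) y := by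
  cases y with
  | infty => rw [onePointCharacter_infty_apply, onePointExtend_infty, add_zero]
  | coe φ => rw [onePointCharacter_coe_apply, onePointExtend_coe, gelfandEval_apply]

lemma continuous_onePointCharacter [ProperSpace 𝕜] :
    Continuous (onePointCharacter : OnePoint (characterSpace 𝕜 A) → _) := by
  refine Continuous.subtype_mk (WeakBilin.continuous_of_continuous_eval _ fun x => ?_) _
  exact ((map_continuous (onePointExtend (gelfandEval 𝕜 x.snd))).const_add x.fst).congr
    fun y => (onePointCharacter_apply y x).symm

lemma injective_onePointCharacter :
    Function.Injective (onePointCharacter : OnePoint (characterSpace 𝕜 A) → _) := by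
  have hne (φ : characterSpace 𝕜 A) : CharacterSpace.toNonUnitalAlgHom φ ≠ 0 := fun h => by
    obtain ⟨a, ha⟩ := exists_character_apply_ne_zero φ
    exact ha (DFunLike.congr_fun h a)
  refine CharacterSpace.equivAlgHom.symm.injective.comp <| Unitization.lift.injective.comp ?_
  intro y z hyz
  cases y <;> cases z
  · rfl
  · exact absurd hyz.symm (hne _)
  · exact absurd hyz (hne _)
  · exact congrArg _ (CharacterSpace.ext fun a => DFunLike.congr_fun hyz a)

lemma surjective_onePointCharacter :
    Function.Surjective (onePointCharacter : OnePoint (characterSpace 𝕜 A) → _) := by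
  intro χ
  obtain ⟨f, hf⟩ := Unitization.lift.surjective (CharacterSpace.equivAlgHom χ)
  have hfχ (a : A) : f a = χ (a : Unitization 𝕜 A) := by
    simpa using DFunLike.congr_fun hf (a : Unitization 𝕜 A)
  by_cases h0 : f = 0
  · refine ⟨∞, CharacterSpace.equivAlgHom.injective ?_⟩
    rw [← hf, h0]
    rfl
  · have hfc : Continuous f := by
      rw [funext hfχ]
      exact (map_continuous χ).comp (Unitization.isometry_inr (𝕜 := 𝕜)).continuous
    let φ : characterSpace 𝕜 A := ⟨(⟨(f : A →ₗ[𝕜] 𝕜), hfc⟩ : A →L[𝕜] 𝕜),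
      fun h => h0 (NonUnitalAlgHom.ext fun a => congrArg (fun g : A →L[𝕜] 𝕜 => g a) h), map_mul f⟩
    exact ⟨φ, CharacterSpace.equivAlgHom.injective hf⟩

theorem isHomeomorph_onePointCharacter [ProperSpace 𝕜] :
    IsHomeomorph (onePointCharacter : OnePoint (characterSpace 𝕜 A) → _) :=
  isHomeomorph_iff_continuous_bijective.2
    ⟨continuous_onePointCharacter, injective_onePointCharacter, surjective_onePointCharacter⟩

end Unitization

section GelfandDuality

variable {A : Type*} [NonUnitalCommCStarAlgebra A]

lemma character_apply_star (φ : characterSpace ℂ A) (a : A) : φ (star a) = star (φ a) := by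
  have h := map_star (onePointCharacter (φ : OnePoint (characterSpace ℂ A))) (a : Unitization ℂ A)
  simpa [onePointCharacter_coe_apply, ← Unitization.inr_star] using! h

variable (A)

/-- The Gelfand transform of a commutative, possibly non-unital C⋆-algebra. -/
noncomputable def gelfandTransformC₀ : A →⋆ₙₐ[ℂ] C₀(characterSpace ℂ A, ℂ) where
  toFun := gelfandEval ℂ
  map_smul' c a := by ext φ; exact map_smul φ c a
  map_zero' := by ext φ; exact map_zero φ
  map_add' a b := by ext φ; exact map_add φ a b
  map_mul' a b := by ext φ; exact map_mul φ a b
  map_star' a := by ext φ; exact character_apply_star φ a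

lemma gelfandTransformC₀_injective : Function.Injective (gelfandTransformC₀ A) := by
  refine (injective_iff_map_eq_zero _).2 fun a (ha : gelfandEval ℂ a = 0) => ?_
  refine Unitization.inr_injective (R := ℂ) <| (gelfandTransform_bijective (Unitization ℂ A)).1 ?_
  ext χ
  obtain ⟨y, rfl⟩ := surjective_onePointCharacter χ
  change onePointCharacter y a = onePointCharacter y (0 : A)
  cases y with
  | infty => simp only [onePointCharacter_infty_apply, Unitization.fst_inr]
  | coe φ =>
    have hφ : φ a = 0 := DFunLike.congr_fun ha φ
    simp only [onePointCharacter_coe_apply, Unitization.fst_inr, Unitization.snd_inr, hφ, map_zero]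

lemma gelfandTransformC₀_surjective : Function.Surjective (gelfandTransformC₀ A) := by
  intro f
  let Φ := (isHomeomorph_onePointCharacter (𝕜 := ℂ) (A := A)).homeomorph
  obtain ⟨x, hx⟩ := (gelfandTransform_bijective (Unitization ℂ A)).2
    ((onePointExtend f).comp (Φ.symm : C(_, _)))
  have hxf (y) : onePointCharacter y x = onePointExtend f y :=
    (DFunLike.congr_fun hx (Φ y)).trans (congrArg (onePointExtend f) (Φ.symm_apply_apply y))
  have hfst : x.fst = 0 := (onePointCharacter_infty_apply x).symm.trans (hxf ∞)
  refine ⟨x.snd, ZeroAtInftyContinuousMap.ext fun φ => ?_⟩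
  have hφ := hxf φ
  rwa [onePointCharacter_coe_apply, hfst, zero_add, onePointExtend_coe] at hφ

/-- Gelfand duality for a commutative, possibly non-unital C⋆-algebra. -/
noncomputable def gelfandEquivC₀ : A ≃⋆ₐ[ℂ] C₀(characterSpace ℂ A, ℂ) :=
  .ofBijective (gelfandTransformC₀ A)
    ⟨gelfandTransformC₀_injective A, gelfandTransformC₀_surjective A⟩

variable {A}

theorem sigmaCompactSpace_characterSpace_iff :
    SigmaCompactSpace (characterSpace ℂ A) ↔
      ∃ e : ℕ → A, (∀ n, ‖e n‖ ≤ 1) ∧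
        ∀ a, Tendsto (fun n => ‖a * e n - a‖) atTop (𝓝 0) := by
  let G := gelfandEquivC₀ A
  constructor
  · intro _
    obtain ⟨e, he1, he⟩ := exists_seq_approximateUnit_zeroAtInfty (X := characterSpace ℂ A) ℂ
    refine ⟨fun n => G.symm (e n), fun n => (StarAlgEquiv.norm_map G.symm (e n)).trans_le (he1 n),
      fun a => (he (G a)).congr fun n => ?_⟩
    rw [← StarAlgEquiv.norm_map G, map_sub, map_mul, G.apply_symm_apply]
  · rintro ⟨e, -, he⟩
    refine sigmaCompactSpace_of_seq_approximateUnit (e := fun n => G (e n)) fun f =>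
      (he (G.symm f)).congr fun n => ?_
    rw [← StarAlgEquiv.norm_map G, map_sub, map_mul, G.apply_symm_apply]

theorem CountablyDecomposable.cccSpace_characterSpace (hA : CountablyDecomposable A) :
    CCCSpace (characterSpace ℂ A) :=
  (hA.of_injective (gelfandEquivC₀ A).symm (gelfandEquivC₀ A).symm.injective).cccSpace

end GelfandDuality

theorem stmt4_general {A : Type*} [NonUnitalCommCStarAlgebra A] (hA : CountablyDecomposable A) :
    List.TFAE [ParacompactSpace (characterSpace ℂ A), SigmaCompactSpace (characterSpace ℂ A),
      LindelofSpace (characterSpace ℂ A),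
      ∃ e : ℕ → A, (∀ n, ‖e n‖ ≤ 1) ∧
        ∀ a, Tendsto (fun n => ‖a * e n - a‖) atTop (𝓝 0)] := by
  have := hA.cccSpace_characterSpace
  have htop := CCCSpace.tfae_paracompact_sigmaCompact_lindelof (characterSpace ℂ A)
  tfae_have 1 ↔ 2 := htop.out 0 1
  tfae_have 2 ↔ 3 := htop.out 1 2
  tfae_have 2 ↔ 4 := sigmaCompactSpace_characterSpace_iff
  tfae_finish

/-- For a commutative C*-subalgebra `S` of the bounded operators on a separable Hilbert
space, the following are equivalent: the spectrum of `S` is paracompact; the spectrum is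
σ-compact; the spectrum is Lindelöf; `S` has a sequential approximate identity bounded
by one. -/
theorem stmt4 {H : Type*} [NormedAddCommGroup H] [InnerProductSpace ℂ H] [CompleteSpace H]
    [TopologicalSpace.SeparableSpace H]
    (S : NonUnitalStarSubalgebra ℂ (H →L[ℂ] H))
    (hclosed : IsClosed (S : Set (H →L[ℂ] H)))
    (hcomm : ∀ a b : S, a * b = b * a) :
    List.TFAE [ParacompactSpace (WeakDual.characterSpace ℂ S),
      SigmaCompactSpace (WeakDual.characterSpace ℂ S),
      LindelofSpace (WeakDual.characterSpace ℂ S),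
      ∃ e : ℕ → S, (∀ n, ‖(e n : H →L[ℂ] H)‖ ≤ 1) ∧
        ∀ a : S, Tendsto (fun n => ‖((a * e n - a : S) : H →L[ℂ] H)‖) atTop (nhds 0)] := by
  let inst := NonUnitalStarSubalgebra.nonUnitalCStarAlgebra S (h_closed := hclosed)
  let : NonUnitalCommCStarAlgebra S := { inst with mul_comm := hcomm }
  exact stmt4_general <| (countablyDecomposable_continuousLinearMap ℂ H).of_injective
    (NonUnitalStarSubalgebraClass.subtype S) Subtype.val_injective
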